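/- Let Σ = {a,b}, let L ⊆ Σ* be a regular language, let x_n denote the n-th word over {a,b} in shortlex order, and let M = {(n)_2 : n ≥ 0 and x_n ∈ L} ⊆ {0,1}* with characteristic function χ_M : {0,1}* → K into a field K. Then the set of right translates {χ_M ↼ (n)_2 : n ≥ 1}, i.e., the set of functions v ↦ χ_M((n)_2 v) on {0,1}* as n ranges over the positive integers, is finite. -/

import Mathlib

/-- `word n` is the `n`-th word over the two-letter alphabet `{a, b}` in shortlex
(dictionary) order, encoding `a` as `false` and `b` as `true`:
`word 0 = Λ`, `word (2n+1) = word n ++ [a]`, `word (2n+2) = word n ++ [b]`. -/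
def word : ℕ → List Bool
  | 0 => []
  | n + 1 => word (n / 2) ++ [decide (n % 2 = 1)]
decreasing_by exact Nat.lt_succ_of_le (Nat.div_le_self n 2)

/-- A language `L ⊆ Σ*` is regular if it is accepted by a deterministic finite
automaton, i.e. by a finite set of states with a transition function, an initial
state, and a set of accepting states. -/
def IsRegularLanguage {α : Type} (L : Set (List α)) : Prop :=
  ∃ (Q : Type) (_ : Fintype Q) (step : Q → α → Q) (start : Q) (accept : Set Q),
    L = {w | w.foldl step start ∈ accept}

/-- `rep n` is the canonical base-2 representation `(n)_2` of `n` as a word over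
`{0, 1}` (encoded as `Bool`, `0 = false`, `1 = true`), most significant digit
first, with no leading zeros; `rep 0` is the empty word. -/
def rep (n : ℕ) : List Bool := (Nat.bits n).reverse

/-!
Deleting the leading `1` of `(n + 1)_2` and reading `0` as `a` and `1` as `b` yields the word `x_n`.
Hence `M` consists of the binary words without leading zero whose successor, minus its first letter,
lies in `L`. Each of these operations preserves regularity; for the successor, an automaton keeps
track of the states reached on `w` and on `w + 1` simultaneously. So `M` is regular, and by
Myhill–Nerode it has only finitely many right translates.
-/

theorem IsRegularLanguage.isRegular {α : Type} {L : Set (List α)} (hL : IsRegularLanguage L) :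
    Language.IsRegular L := by
  obtain ⟨Q, hQ, step, start, accept, rfl⟩ := hL
  exact ⟨Q, hQ, ⟨step, start, accept⟩, rfl⟩

section RegularLanguages

variable {α : Type*}

theorem isRegular_setOf_head? (p : Option α → Prop) :
    Language.IsRegular {w : List α | p w.head?} := by
  refine .of_finite_range_leftQuotient <|
    (Set.toFinite {{w : List α | p w.head?}, Set.univ, ∅}).subset ?_
  rintro _ ⟨_ | ⟨a, u⟩, rfl⟩
  · exact Or.inl rfl
  · by_cases ha : p (some a)
    · exact Or.inr (Or.inl (Set.eq_univ_of_forall fun _ => ha))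
    · exact Or.inr (Or.inr (Set.eq_empty_of_forall_notMem fun _ => ha))

theorem isRegular_setOf_tail_mem {L : Language α} (hL : L.IsRegular) :
    Language.IsRegular {w : List α | w.tail ∈ L} := by
  refine .of_finite_range_leftQuotient <|
    (hL.finite_range_leftQuotient.insert {w : List α | w.tail ∈ L}).subset ?_
  rintro _ ⟨_ | ⟨a, u⟩, rfl⟩
  · exact Or.inl rfl
  · exact Or.inr ⟨u, rfl⟩

open scoped Classical in
theorem finite_range_rightTranslate {K : Type*} [Zero K] [One K] {L : Language α}
    (hL : L.IsRegular) :
    (Set.range fun u v : List α => if u ++ v ∈ L then (1 : K) else 0).Finite := by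
  have h := hL.finite_range_leftQuotient.image
    fun (S : Language α) (v : List α) => if v ∈ S then (1 : K) else 0
  rwa [← Set.range_comp] at h

end RegularLanguages

/-- Binary increment of a word written least significant digit first, the digit order of
`Nat.bits`. -/
def incrLSB : List Bool → List Bool
  | [] => [true]
  | false :: l => true :: l
  | true :: l => false :: incrLSB l

/-- Binary increment of a word written most significant digit first, the digit order of `rep`.
Leading zeros are allowed. -/
def incr (w : List Bool) : List Bool := (incrLSB w.reverse).reverse

theorem incr_nil : incr [] = [true] := rfl

theorem incr_append_false (w : List Bool) : incr (w ++ [false]) = w ++ [true] := by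
  simp [incr, incrLSB]

theorem incr_append_true (w : List Bool) : incr (w ++ [true]) = incr w ++ [false] := by
  simp [incr, incrLSB]

/-- The automaton that reaches on `w` the pair of states that `A` reaches on `incr w` and on `w`.
It accepts the words whose increment is accepted by `A`. -/
def incrDFA {σ : Type*} (A : DFA Bool σ) : DFA Bool (σ × σ) where
  step s b := (A.step (if b then s.1 else s.2) (!b), A.step s.2 b)
  start := (A.step A.start true, A.start)
  accept := {s | s.1 ∈ A.accept}

theorem incrDFA_eval {σ : Type*} (A : DFA Bool σ) (w : List Bool) :
    (incrDFA A).eval w = (A.eval (incr w), A.eval w) := by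
  induction w using List.reverseRecOn with
  | nil => rfl
  | append_singleton w b ih =>
    rw [DFA.eval_append_singleton, ih]
    cases b <;> simp [incrDFA, incr_append_false, incr_append_true]

theorem isRegular_setOf_incr_mem {L : Language Bool} (hL : L.IsRegular) :
    Language.IsRegular {w | incr w ∈ L} := by
  obtain ⟨σ, _, A, rfl⟩ := hL
  refine ⟨σ × σ, inferInstance, incrDFA A, Set.ext fun w => ?_⟩
  change ((incrDFA A).eval w).1 ∈ A.accept ↔ A.eval (incr w) ∈ A.accept
  rw [incrDFA_eval]

theorem rep_two_mul {n : ℕ} (hn : n ≠ 0) : rep (2 * n) = rep n ++ [false] := by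
  rw [rep, Nat.bit0_bits n hn, List.reverse_cons, rep]

theorem rep_two_mul_add_one (n : ℕ) : rep (2 * n + 1) = rep n ++ [true] := by
  rw [rep, Nat.bit1_bits, List.reverse_cons, rep]

theorem incr_rep (n : ℕ) : incr (rep n) = rep (n + 1) := by
  induction n using Nat.evenOddRec with
  | h0 => simp [rep, incr_nil]
  | h_even n ih =>
    obtain rfl | hn := eq_or_ne n 0
    · exact ih
    · rw [rep_two_mul hn, incr_append_false, rep_two_mul_add_one]
  | h_odd n ih =>
    rw [rep_two_mul_add_one, incr_append_true, ih, ← rep_two_mul n.succ_ne_zero]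
    rfl

theorem word_two_mul_add_one (n : ℕ) : word (2 * n + 1) = word n ++ [false] := by
  simp [word]

theorem word_two_mul_add_two (n : ℕ) : word (2 * n + 2) = word n ++ [true] := by
  rw [word, show (2 * n + 1) / 2 = n by lia]
  simp

theorem rep_succ (n : ℕ) : rep (n + 1) = true :: word n := by
  induction n using Nat.strong_induction_on with
  | h n ih =>
    obtain _ | n := n
    · simp [rep, word]
    · obtain ⟨k, rfl | rfl⟩ := n.even_or_odd'
      · calc rep (2 * (k + 1))
          _ = rep (k + 1) ++ [false] := rep_two_mul k.succ_ne_zero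
          _ = true :: word (2 * k + 1) := by
            rw [ih k (by lia), word_two_mul_add_one, List.cons_append]
      · calc rep (2 * (k + 1) + 1)
          _ = rep (k + 1) ++ [true] := rep_two_mul_add_one (k + 1)
          _ = true :: word (2 * k + 2) := by
            rw [ih k (by lia), word_two_mul_add_two, List.cons_append]

theorem word_eq_tail_incr_rep (n : ℕ) : word n = (incr (rep n)).tail := by
  rw [incr_rep, rep_succ, List.tail_cons]

theorem head?_rep_ne_some_false (n : ℕ) : (rep n).head? ≠ some false := by
  cases n with
  | zero => simp [rep]
  | succ n => simp [rep_succ]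

theorem exists_rep_eq {w : List Bool} (hw : w.head? ≠ some false) : ∃ n, rep n = w := by
  induction w using List.reverseRecOn with
  | nil => exact ⟨0, by simp [rep]⟩
  | append_singleton w b ih =>
    obtain ⟨n, rfl⟩ := ih fun h => hw (by simp [h])
    cases b with
    | true => exact ⟨2 * n + 1, rep_two_mul_add_one n⟩
    | false =>
      have hn : n ≠ 0 := by
        rintro rfl
        simp [rep] at hw
      exact ⟨2 * n, rep_two_mul hn⟩

theorem exists_eq_rep_and_word_mem_iff {L : Set (List Bool)} {w : List Bool} :
    (∃ m, w = rep m ∧ word m ∈ L) ↔ w.head? ≠ some false ∧ (incr w).tail ∈ L := by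
  constructor
  · rintro ⟨m, rfl, hm⟩
    rw [word_eq_tail_incr_rep] at hm
    exact ⟨head?_rep_ne_some_false m, hm⟩
  · rintro ⟨hw, hL⟩
    obtain ⟨m, rfl⟩ := exists_rep_eq hw
    rw [← word_eq_tail_incr_rep] at hL
    exact ⟨m, rfl, hL⟩

theorem isRegular_setOf_eq_rep_and_word_mem {L : Language Bool} (hL : L.IsRegular) :
    Language.IsRegular {w | ∃ m, w = rep m ∧ word m ∈ L} := by
  have h : ({w | ∃ m, w = rep m ∧ word m ∈ L} : Language Bool) =
      {w | w.head? ≠ some false} ⊓ {w | (incr w).tail ∈ L} :=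
    Set.ext fun _ => exists_eq_rep_and_word_mem_iff
  rw [h]
  exact (isRegular_setOf_head? (· ≠ some false)).inf
    (isRegular_setOf_incr_mem (isRegular_setOf_tail_mem hL))

open scoped Classical in
theorem finite_rightTranslates_of_rep_general {K : Type*} [Zero K] [One K]
    (L : Set (List Bool)) (hL : IsRegularLanguage L) :
    Set.Finite {f : List Bool → K | ∃ u : List Bool,
      f = fun v => if u ++ v ∈ {w : List Bool | ∃ m : ℕ, w = rep m ∧ word m ∈ L}
        then (1 : K) else 0} :=
  (finite_range_rightTranslate (isRegular_setOf_eq_rep_and_word_mem hL.isRegular)).subset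
    fun _ ⟨u, hu⟩ => ⟨u, hu.symm⟩

open scoped Classical in
/-- Let `L ⊆ {a,b}*` be regular, let `M = {(n)_2 : x_n ∈ L} ⊆ {0,1}*`, and let
`χ_M : {0,1}* → K` (`K` a field) be the characteristic function of `M`.  Then the
set of right translates `χ_M ↼ (n)_2 = (v ↦ χ_M ((n)_2 v))`, for `n ≥ 1`, is
finite. -/
theorem finite_rightTranslates_of_rep {K : Type} [Field K]
    (L : Set (List Bool)) (hL : IsRegularLanguage L) :
    Set.Finite {f : List Bool → K | ∃ n : ℕ, 1 ≤ n ∧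
      f = fun v => if rep n ++ v ∈ {w : List Bool | ∃ m : ℕ, w = rep m ∧ word m ∈ L}
        then (1 : K) else 0} := by
  exact (finite_rightTranslates_of_rep_general L hL).subset fun _ ⟨n, _, hf⟩ => ⟨rep n, hf⟩
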